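/- arXiv:2402.10361 — 5 statements merged into one kernel-verified Lean document; each statement's English description precedes it below -/
import Mathlib

section
/- The function ū₀(x) = 1 − 3/(1 + 2 cosh(x) − √3 sinh(x)) is well defined on all of ℝ (the denominator is strictly positive everywhere), is twice continuously differentiable, and satisfies ū₀''(x) + ū₀(x)(1 − ū₀(x)) = 0 for all x ∈ ℝ, together with ū₀(0) = 0, ū₀(x) → 1 as x → −∞, and ū₀'(x) → 0 as x → −∞. -/
/-!
Write `D = 1 + 2 cosh - √3 sinh` and `E = D' = 2 sinh - √3 cosh`. Then `D'' = D - 1`, and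
`cosh² - sinh² = 1` gives the first integral `E² = D² - 2 D`. With `u = 1 - 3 / D` this yields
`u' = 3 E / D²` and `u'' = (9 - 3 D) / D² = -u (1 - u)`. The bound `D > exp (-x)` shows that `D` is
positive and tends to `∞` at `-∞`, hence `u → 1`; and `|E| ≤ D` gives `|u'| ≤ 3 / D → 0`.
-/

namespace StandingWave

/-- The denominator `D` of the standing wave. -/
noncomputable def D (x : ℝ) : ℝ := 1 + 2 * Real.cosh x - Real.sqrt 3 * Real.sinh x

/-- The derivative of `D`. -/
noncomputable def E (x : ℝ) : ℝ := 2 * Real.sinh x - Real.sqrt 3 * Real.cosh x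

lemma exp_neg_lt_D (x : ℝ) : Real.exp (-x) < D x := by
  have h0 : 0 ≤ Real.sqrt 3 := Real.sqrt_nonneg 3
  have h2 : Real.sqrt 3 < 2 := by
    rw [Real.sqrt_lt' (by norm_num)]; norm_num
  have e1 := Real.exp_pos x
  have e2 := Real.exp_pos (-x)
  unfold D
  rw [Real.cosh_eq, Real.sinh_eq]
  nlinarith [mul_nonneg h0 e2.le, mul_pos (sub_pos.2 h2) e1]

lemma D_pos (x : ℝ) : 0 < D x := (Real.exp_pos _).trans (exp_neg_lt_D x)

/-- The first integral of `D'' = D - 1`. -/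
lemma E_sq (x : ℝ) : E x ^ 2 = D x ^ 2 - 2 * D x := by
  have h3 : Real.sqrt 3 ^ 2 = 3 := Real.sq_sqrt (by norm_num)
  have hc := Real.cosh_sq x
  unfold D E
  linear_combination (Real.cosh x ^ 2 - Real.sinh x ^ 2) * h3 - hc

lemma hasDerivAt_D (x : ℝ) : HasDerivAt D (E x) x :=
  (((Real.hasDerivAt_cosh x).const_mul 2).const_add 1).sub
    ((Real.hasDerivAt_sinh x).const_mul (Real.sqrt 3))

lemma hasDerivAt_E (x : ℝ) : HasDerivAt E (D x - 1) x := by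
  refine (((Real.hasDerivAt_sinh x).const_mul 2).sub
    ((Real.hasDerivAt_cosh x).const_mul (Real.sqrt 3))).congr_deriv ?_
  unfold D
  ring

lemma contDiff_D : ContDiff ℝ 2 D := by
  unfold D
  exact (contDiff_const.add (contDiff_const.mul Real.contDiff_cosh)).sub
    (contDiff_const.mul Real.contDiff_sinh)

lemma deriv_u : deriv (fun x => 1 - 3 / D x) = fun x => 3 * E x / D x ^ 2 := by
  funext x
  have h := (((hasDerivAt_const x (3 : ℝ)).div (hasDerivAt_D x) (D_pos x).ne').const_sub 1).deriv
  refine h.trans ?_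
  ring

lemma deriv_deriv_u (x : ℝ) :
    deriv (fun x => 3 * E x / D x ^ 2) x = (9 - 3 * D x) / D x ^ 2 := by
  have hD := (D_pos x).ne'
  have h := (((hasDerivAt_E x).const_mul 3).div ((hasDerivAt_D x).pow 2) (pow_ne_zero 2 hD)).deriv
  refine h.trans ?_
  have hE := E_sq x
  simp only [Pi.pow_apply]
  field_simp
  push_cast
  linear_combination (-6) * D x * hE

lemma tendsto_D : Filter.Tendsto D Filter.atBot Filter.atTop :=
  Filter.tendsto_atTop_mono (fun x => (exp_neg_lt_D x).le)
    (Real.tendsto_exp_atTop.comp Filter.tendsto_neg_atBot_atTop)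

lemma tendsto_three_div_D : Filter.Tendsto (fun x => 3 / D x) Filter.atBot (nhds 0) :=
  tendsto_D.const_div_atTop 3

lemma abs_deriv_u_le (x : ℝ) : |3 * E x / D x ^ 2| ≤ 3 / D x := by
  have hD := D_pos x
  have hE : |E x| ≤ D x := abs_le_of_sq_le_sq (by linarith [E_sq x]) hD.le
  rw [abs_div, abs_mul, abs_of_pos (pow_pos hD 2), abs_of_pos (by norm_num : (0 : ℝ) < 3),
    div_le_div_iff₀ (pow_pos hD 2) hD]
  nlinarith

end StandingWave

open StandingWave in
/-- The function `ū₀(x) = 1 − 3/(1 + 2 cosh x − √3 sinh x)` is well defined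
on all of `ℝ` (its denominator is strictly positive), is twice continuously
differentiable, satisfies `ū₀'' + ū₀(1 − ū₀) = 0` on `ℝ`, and satisfies `ū₀(0) = 0`,
`ū₀(x) → 1` and `ū₀'(x) → 0` as `x → −∞`. -/
theorem standing_wave_solution :
    ∀ u : ℝ → ℝ,
      (u = fun x => 1 - 3 / (1 + 2 * Real.cosh x - Real.sqrt 3 * Real.sinh x)) →
      (∀ x : ℝ, 0 < 1 + 2 * Real.cosh x - Real.sqrt 3 * Real.sinh x) ∧
      ContDiff ℝ 2 u ∧
      (∀ x : ℝ, deriv (deriv u) x + u x * (1 - u x) = 0) ∧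
      u 0 = 0 ∧
      Filter.Tendsto u Filter.atBot (nhds 1) ∧
      Filter.Tendsto (deriv u) Filter.atBot (nhds 0) := by
  intro u hu
  have hu' : u = fun x => 1 - 3 / D x := hu
  clear hu
  subst hu'
  refine ⟨D_pos, ?_, fun x => ?_, ?_, ?_, ?_⟩
  · exact contDiff_const.sub (contDiff_const.div contDiff_D fun x => (D_pos x).ne')
  · rw [deriv_u, deriv_deriv_u]
    have hD := (D_pos x).ne'
    field_simp
    ring
  · norm_num [D]
  · simpa using tendsto_three_div_D.const_sub 1
  · rw [deriv_u]
    exact squeeze_zero_norm abs_deriv_u_le tendsto_three_div_D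
end

section
/- The function ū₀(x) = 1 − 3/(1 + 2 cosh(x) − √3 sinh(x)) satisfies 0 < ū₀(x) < 1 for all x < 0 and is strictly decreasing on (−∞, 0], i.e., ū₀'(x) < 0 for all x ∈ (−∞, 0). -/
/-!
Write `D x = 1 + 2 cosh x - √3 sinh x` for the denominator, so that the function is `1 - 3 / D`.
For `x < 0` one has `cosh x > 1` and `sinh x < 0`, hence `D x > 3`, which gives the bounds.
Moreover `(1 - 3 / D)' = 3 D' / D²` and `D' x = 2 sinh x - √3 cosh x < 0` for `x ≤ 0`.
-/

/-- The function `ū₀(x) = 1 − 3/(1 + 2 cosh x − √3 sinh x)` satisfies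
`0 < ū₀(x) < 1` for all `x < 0`, and is strictly decreasing on `(−∞, 0]`, i.e.
`ū₀'(x) < 0` for all `x < 0`. -/
theorem standing_wave_monotone :
    ∀ u : ℝ → ℝ,
      (u = fun x => 1 - 3 / (1 + 2 * Real.cosh x - Real.sqrt 3 * Real.sinh x)) →
      (∀ x : ℝ, x < 0 → 0 < u x ∧ u x < 1) ∧
      StrictAntiOn u (Set.Iic 0) ∧
      (∀ x : ℝ, x < 0 → deriv u x < 0) := by
  intro u hu
  have hs : 0 < Real.sqrt 3 := Real.sqrt_pos.mpr (by norm_num)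
  have hD : ∀ x : ℝ, x ≤ 0 → 0 < 1 + 2 * Real.cosh x - Real.sqrt 3 * Real.sinh x := by
    intro x hx
    have h1 := Real.cosh_pos x
    have h2 := mul_nonpos_of_nonneg_of_nonpos hs.le (Real.sinh_nonpos_iff.mpr hx)
    linarith
  have hder : ∀ x : ℝ, x ≤ 0 → HasDerivAt u
      (3 * (2 * Real.sinh x - Real.sqrt 3 * Real.cosh x) /
        (1 + 2 * Real.cosh x - Real.sqrt 3 * Real.sinh x) ^ 2) x := by
    intro x hx
    rw [hu]
    have h1 := (((Real.hasDerivAt_cosh x).const_mul 2).const_add 1).fun_sub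
      ((Real.hasDerivAt_sinh x).const_mul (Real.sqrt 3))
    have h2 := ((hasDerivAt_const x (3 : ℝ)).fun_div h1 (hD x hx).ne').const_sub 1
    refine h2.congr_deriv ?_
    ring
  have hneg : ∀ x : ℝ, x < 0 → deriv u x < 0 := by
    intro x hx
    rw [(hder x hx.le).deriv]
    have h1 := mul_pos hs (Real.cosh_pos x)
    have h2 := Real.sinh_neg_iff.mpr hx
    exact div_neg_of_neg_of_pos (by linarith) (pow_pos (hD x hx.le) 2)
  refine ⟨fun x hx => ?_, ?_, hneg⟩
  · have h1 := Real.one_lt_cosh.mpr hx.ne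
    have h2 := mul_neg_of_pos_of_neg hs (Real.sinh_neg_iff.mpr hx)
    have h3 := hD x hx.le
    have h4 : 3 / (1 + 2 * Real.cosh x - Real.sqrt 3 * Real.sinh x) < 1 := by
      rw [div_lt_one h3]
      linarith
    have h5 : 0 < 3 / (1 + 2 * Real.cosh x - Real.sqrt 3 * Real.sinh x) := by positivity
    simp only [hu]
    constructor <;> linarith
  · refine strictAntiOn_of_deriv_neg (convex_Iic 0)
      (fun x hx => (hder x hx).continuousAt.continuousWithinAt) fun x hx => ?_
    rw [interior_Iic] at hx
    exact hneg x hx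
end

section
/- Let 0 ≤ c < 2 and let u : (−∞, 0] → ℝ be a spreading wave: u is twice continuously differentiable, u'' + cu' + u(1 − u) = 0 on (−∞, 0], u(0) = 0, 0 < u(z) < 1 and u'(z) < 0 for all z < 0, and u(z) → 1 as z → −∞. Let λ ≥ 0 be real, and let q : (−∞, 0] → ℝ be twice continuously differentiable with q''(z) + (1 − c²/4 − 2u(z)) q(z) = λ q(z) for all z ≤ 0, q(0) = 0, and q(z) → 0 as z → −∞. Then q is identically zero. -/
open Set Filter

/-!
With `v = e^{cz/2} u` the wave equation becomes `v'' = a v`, where `a = c²/4 - 1 + u`, while the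
eigenvalue problem reads `q'' = b q`, where `b = lam + 2u - 1 + c²/4`, so that `b - a = lam + u ≥ 0`.
The function `v` is positive on `(-∞, 0)` and vanishes at `0`.

Put `W = q' v - q v'`, so that `W' = (b - a) q v`. A Sturm-type comparison
(`wronskian_mul_nonpos`) shows `W q ≤ 0` on `(-∞, 0)`: the function `W q / v` is nondecreasing, so
if `W q` were positive at some `z₀` it would stay positive on `[z₀, 0)`, making `W²` nondecreasing
there, which is impossible as `W(0) = 0`. Two consequences follow. First, `(q / v)²` is
nonincreasing, so a nonzero value of `q` at one point forces `q ≠ 0` everywhere to the left of it.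
Second, `q q' ≤ (v' / v) q² ≤ (c/2) q²` because `u' < 0`; that is, `|q|` decays at `-∞` at most
like `e^{cz/2}`.

But `u → 1` gives `b ≥ c²/4 + 1/2` near `-∞`, so a solution tending to zero decays strictly faster
than `e^{cz/2}`: convexity of `q²` gives `q q' ≥ 0`, hence `q'² - (c²/4 + 1/2) q²` is nondecreasing,
and it is therefore nonnegative, contradicting the previous bound (`tail_false`).
-/

/-- Sturm comparison on `(-∞, 0]`: if `v'' = a v`, `q'' = b q` with `a ≤ b`, both functions vanish
at `0` and `v > 0` on `(-∞, 0)`, then `(q / v)²` has nonpositive derivative on `(-∞, 0)`. -/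
theorem wronskian_mul_nonpos (v v1 q q1 a b : ℝ → ℝ)
    (hv : ∀ z ≤ (0 : ℝ), HasDerivWithinAt v (v1 z) (Iic 0) z)
    (hv1 : ∀ z ≤ (0 : ℝ), HasDerivWithinAt v1 (a z * v z) (Iic 0) z)
    (hq : ∀ z ≤ (0 : ℝ), HasDerivWithinAt q (q1 z) (Iic 0) z)
    (hq1 : ∀ z ≤ (0 : ℝ), HasDerivWithinAt q1 (b z * q z) (Iic 0) z)
    (hab : ∀ z < (0 : ℝ), a z ≤ b z) (hpos : ∀ z < (0 : ℝ), 0 < v z)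
    (hv0 : v 0 = 0) (hq0 : q 0 = 0) :
    ∀ z < (0 : ℝ), (q1 z * v z - q z * v1 z) * q z ≤ 0 := by
  intro z₀ hz₀
  by_contra! hcon
  have hW : ∀ z ≤ (0 : ℝ), HasDerivWithinAt (fun z => q1 z * v z - q z * v1 z)
      ((b z - a z) * q z * v z) (Iic 0) z := by
    intro z hz
    refine (((hq1 z hz).mul (hv z hz)).sub ((hq z hz).mul (hv1 z hz))).congr_deriv ?_
    ring
  have hF : MonotoneOn (fun z => (q1 z * v z - q z * v1 z) * q z / v z) (Iio 0) := by
    have hd : ∀ z ∈ Iio (0 : ℝ),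
        HasDerivWithinAt (fun z => (q1 z * v z - q z * v1 z) * q z / v z)
          ((b z - a z) * q z ^ 2 + (q1 z * v z - q z * v1 z) ^ 2 / v z ^ 2) (Iio 0) z := by
      intro z hz
      have hne := (hpos z hz).ne'
      refine ((((hW z (le_of_lt hz)).mul (hq z (le_of_lt hz))).div
        (hv z (le_of_lt hz)) hne).mono Iio_subset_Iic_self).congr_deriv ?_
      simp only [Pi.mul_apply]
      field_simp
      ring
    refine monotoneOn_of_hasDerivWithinAt_nonneg (convex_Iio 0)
      (fun z hz => (hd z hz).continuousWithinAt)
      (fun z hz => by rw [interior_Iio] at hz ⊢; exact hd z hz) ?_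
    intro z hz
    rw [interior_Iio] at hz
    have := sub_nonneg.2 (hab z hz)
    positivity
  have hstay : ∀ z, z₀ ≤ z → z < 0 → 0 < (q1 z * v z - q z * v1 z) * q z := by
    intro z hz hz0
    have h1 := hF (mem_Iio.2 hz₀) (mem_Iio.2 hz0) hz
    have h2 : 0 < (q1 z₀ * v z₀ - q z₀ * v1 z₀) * q z₀ / v z₀ := div_pos hcon (hpos _ hz₀)
    have h3 := lt_of_lt_of_le h2 h1
    exact (div_pos_iff_of_pos_right (hpos z hz0)).1 h3
  have hW2 : MonotoneOn (fun z => (q1 z * v z - q z * v1 z) ^ 2) (Icc z₀ 0) := by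
    have hd : ∀ z ∈ Icc z₀ (0 : ℝ),
        HasDerivWithinAt (fun z => (q1 z * v z - q z * v1 z) ^ 2)
          (2 * (b z - a z) * v z * ((q1 z * v z - q z * v1 z) * q z)) (Icc z₀ 0) z := by
      intro z hz
      refine (((hW z hz.2).pow 2).mono Icc_subset_Iic_self).congr_deriv ?_
      ring
    refine monotoneOn_of_hasDerivWithinAt_nonneg (convex_Icc _ _)
      (fun z hz => (hd z hz).continuousWithinAt)
      (fun z hz => (hd z (interior_subset hz)).mono interior_subset) ?_
    intro z hz
    rw [interior_Icc] at hz
    have h1 := sub_nonneg.2 (hab z hz.2)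
    have h2 := hpos z hz.2
    have h3 := hstay z hz.1.le hz.2
    positivity
  have h := hW2 (left_mem_Icc.2 hz₀.le) (right_mem_Icc.2 hz₀.le) hz₀.le
  simp only [hv0, hq0] at h
  have h0 : q1 z₀ * v z₀ - q z₀ * v1 z₀ = 0 := by
    rw [← sq_eq_zero_iff]
    refine le_antisymm (h.trans (by simp)) (sq_nonneg _)
  rw [h0] at hcon
  simp at hcon

/-- If `q'' = b q` with `b ≥ c²/4 + 1/2` on `(-∞, M]`, a nonzero `q` that tends to `0` at `-∞`
decays faster than `e^{cz/2}`, which is incompatible with `q q' ≤ (c/2) q²`. -/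
theorem tail_false (c M : ℝ) (q q1 b : ℝ → ℝ)
    (hq : ∀ z ≤ M, HasDerivWithinAt q (q1 z) (Iic M) z)
    (hq1 : ∀ z ≤ M, HasDerivWithinAt q1 (b z * q z) (Iic M) z)
    (hb : ∀ z ≤ M, c ^ 2 / 4 + 1 / 2 ≤ b z)
    (hne : q M ≠ 0) (hle : q M * q1 M ≤ c / 2 * q M ^ 2)
    (hlim : Tendsto q atBot (nhds 0)) : False := by
  have hlim2 : Tendsto (fun z => q z ^ 2) atBot (nhds 0) := by
    simpa using hlim.pow 2
  have hmono : MonotoneOn (fun z => q z * q1 z) (Iic M) := by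
    have hd : ∀ z ∈ Iic M, HasDerivWithinAt (fun z => q z * q1 z)
        (q1 z ^ 2 + b z * q z ^ 2) (Iic M) z := by
      intro z hz
      refine ((hq z hz).mul (hq1 z hz)).congr_deriv ?_
      ring
    refine monotoneOn_of_hasDerivWithinAt_nonneg (convex_Iic _)
      (fun z hz => (hd z hz).continuousWithinAt)
      (fun z hz => (hd z (interior_subset hz)).mono interior_subset) ?_
    intro z hz
    have hzM : z ∈ Iic M := interior_subset hz
    have h1 : 0 ≤ b z := le_trans (by positivity) (hb z hzM)
    positivity
  have hnonneg : ∀ z ≤ M, 0 ≤ q z * q1 z := by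
    intro z hz
    by_contra! hneg
    have hanti : AntitoneOn (fun z => q z ^ 2) (Iic z) := by
      have hd : ∀ s ∈ Iic z, HasDerivWithinAt (fun z => q z ^ 2)
          (2 * (q s * q1 s)) (Iic z) s := by
        intro s hs
        refine (((hq s (le_trans hs hz)).pow 2).mono (Iic_subset_Iic.2 hz)).congr_deriv ?_
        ring
      refine antitoneOn_of_hasDerivWithinAt_nonpos (convex_Iic _)
        (fun s hs => (hd s hs).continuousWithinAt)
        (fun s hs => (hd s (interior_subset hs)).mono interior_subset) ?_
      intro s hs
      have hs' : s ∈ Iic z := interior_subset hs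
      have h1 : q s * q1 s ≤ q z * q1 z := hmono (le_trans hs' hz : s ≤ M) hz hs'
      linarith
    have h0 : q z ^ 2 ≤ 0 := by
      refine ge_of_tendsto hlim2 ?_
      filter_upwards [eventually_le_atBot z] with s hs
      exact hanti hs (mem_Iic.2 le_rfl) hs
    have : q z = 0 := by nlinarith [sq_nonneg (q z)]
    simp [this] at hneg
  have hE : MonotoneOn (fun z => q1 z ^ 2 - (c ^ 2 / 4 + 1 / 2) * q z ^ 2) (Iic M) := by
    have hd : ∀ z ∈ Iic M, HasDerivWithinAt
        (fun z => q1 z ^ 2 - (c ^ 2 / 4 + 1 / 2) * q z ^ 2)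
        (2 * (b z - (c ^ 2 / 4 + 1 / 2)) * (q z * q1 z)) (Iic M) z := by
      intro z hz
      refine (((hq1 z hz).pow 2).sub (((hq z hz).pow 2).const_mul _)).congr_deriv ?_
      ring
    refine monotoneOn_of_hasDerivWithinAt_nonneg (convex_Iic _)
      (fun z hz => (hd z hz).continuousWithinAt)
      (fun z hz => (hd z (interior_subset hz)).mono interior_subset) ?_
    intro z hz
    have hzM : z ∈ Iic M := interior_subset hz
    have h1 := sub_nonneg.2 (hb z hzM)
    have h2 := hnonneg z hzM
    positivity
  -- Only `q → 0` is needed for the limit: the term `q'²` is discarded by its sign.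
  have hEM : 0 ≤ q1 M ^ 2 - (c ^ 2 / 4 + 1 / 2) * q M ^ 2 := by
    have hl : Tendsto (fun z => -((c ^ 2 / 4 + 1 / 2) * q z ^ 2)) atBot (nhds 0) := by
      simpa using (hlim2.const_mul (c ^ 2 / 4 + 1 / 2)).neg
    refine le_of_tendsto hl ?_
    filter_upwards [eventually_le_atBot M] with s hs
    have h1 : q1 s ^ 2 - (c ^ 2 / 4 + 1 / 2) * q s ^ 2
      ≤ q1 M ^ 2 - (c ^ 2 / 4 + 1 / 2) * q M ^ 2 := hE hs (mem_Iic.2 le_rfl) hs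
    nlinarith [sq_nonneg (q1 s)]
  have hp : 0 < q M ^ 2 := by positivity
  have h1 : (q M * q1 M) ^ 2 ≤ (c / 2 * q M ^ 2) ^ 2 :=
    pow_le_pow_left₀ (hnonneg M le_rfl) hle 2
  have h2 := mul_nonneg hp.le hEM
  nlinarith [mul_pos hp hp]

/-- Let `0 ≤ c < 2` and let `u` be a spreading wave on `(−∞, 0]`.
If `λ ≥ 0` and `q` is a twice continuously differentiable solution of the transformed
eigenvalue problem `q'' + (1 − c²/4 − 2u)q = λq` on `(−∞, 0]` with `q(0) = 0` and
`q(z) → 0` as `z → −∞`, then `q ≡ 0` on `(−∞, 0]`. -/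
theorem no_nonnegative_eigenvalues (c : ℝ) (hc0 : 0 ≤ c) (hc2 : c < 2)
    (u : ℝ → ℝ) (hu : ContDiffOn ℝ 2 u (Iic 0))
    (hode : ∀ z ≤ (0 : ℝ),
      derivWithin (derivWithin u (Iic 0)) (Iic 0) z
        + c * derivWithin u (Iic 0) z + u z * (1 - u z) = 0)
    (hu0 : u 0 = 0)
    (hbound : ∀ z < (0 : ℝ), 0 < u z ∧ u z < 1)
    (hdec : ∀ z < (0 : ℝ), derivWithin u (Iic 0) z < 0)
    (hulim : Tendsto u atBot (nhds 1))
    (lam : ℝ) (hlam : 0 ≤ lam)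
    (q : ℝ → ℝ) (hq : ContDiffOn ℝ 2 q (Iic 0))
    (hqode : ∀ z ≤ (0 : ℝ),
      derivWithin (derivWithin q (Iic 0)) (Iic 0) z
        + (1 - c ^ 2 / 4 - 2 * u z) * q z = lam * q z)
    (hq0 : q 0 = 0)
    (hqlim : Tendsto q atBot (nhds 0)) :
    ∀ z ≤ (0 : ℝ), q z = 0 := by
  have key : ∀ f : ℝ → ℝ, ContDiffOn ℝ 2 f (Iic 0) → ∀ z ≤ (0 : ℝ),
      HasDerivWithinAt f (derivWithin f (Iic 0) z) (Iic 0) z ∧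
      HasDerivWithinAt (derivWithin f (Iic 0))
        (derivWithin (derivWithin f (Iic 0)) (Iic 0) z) (Iic 0) z := by
    intro f hf z hz
    have h1 : ContDiffOn ℝ 1 (derivWithin f (Iic 0)) (Iic 0) :=
      hf.derivWithin (uniqueDiffOn_Iic 0) (by norm_num)
    exact ⟨(hf.differentiableOn (by norm_num) z hz).hasDerivWithinAt,
      (h1.differentiableOn (by norm_num) z hz).hasDerivWithinAt⟩
  have hu' := key u hu
  have hq' := key q hq
  generalize derivWithin u (Iic 0) = u1 at *
  generalize derivWithin q (Iic 0) = q1 at *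
  have hexp : ∀ z : ℝ, HasDerivWithinAt (fun z : ℝ => Real.exp (c * z / 2))
      (Real.exp (c * z / 2) * (c / 2)) (Iic 0) z := by
    intro z
    have h : HasDerivAt (fun z : ℝ => c * z / 2) (c / 2) z := by
      simpa using ((hasDerivAt_id z).const_mul c).div_const 2
    exact h.exp.hasDerivWithinAt
  have hv : ∀ z ≤ (0 : ℝ), HasDerivWithinAt (fun z => Real.exp (c * z / 2) * u z)
      (Real.exp (c * z / 2) * (u1 z + c / 2 * u z)) (Iic 0) z := by
    intro z hz
    refine ((hexp z).mul (hu' z hz).1).congr_deriv ?_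
    ring
  have hv1 : ∀ z ≤ (0 : ℝ), HasDerivWithinAt
      (fun z => Real.exp (c * z / 2) * (u1 z + c / 2 * u z))
      ((c ^ 2 / 4 - 1 + u z) * (Real.exp (c * z / 2) * u z)) (Iic 0) z := by
    intro z hz
    refine ((hexp z).mul ((hu' z hz).2.add ((hu' z hz).1.const_mul (c / 2)))).congr_deriv ?_
    simp only [Pi.add_apply]
    linear_combination Real.exp (c * z / 2) * hode z hz
  have hqd1 : ∀ z ≤ (0 : ℝ), HasDerivWithinAt q1
      ((lam + 2 * u z - 1 + c ^ 2 / 4) * q z) (Iic 0) z := by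
    intro z hz
    refine (hq' z hz).2.congr_deriv ?_
    linear_combination hqode z hz
  have hvpos : ∀ z < (0 : ℝ), 0 < Real.exp (c * z / 2) * u z :=
    fun z hz => mul_pos (Real.exp_pos _) (hbound z hz).1
  have hWq := wronskian_mul_nonpos _ _ q q1 _ _ hv hv1 (fun z hz => (hq' z hz).1) hqd1
    (fun z hz => by have := (hbound z hz).1; linarith) hvpos (by simp [hu0]) hq0
  have hratio : AntitoneOn (fun z => (q z / (Real.exp (c * z / 2) * u z)) ^ 2) (Iio 0) := by
    have hd : ∀ z ∈ Iio (0 : ℝ), HasDerivWithinAt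
        (fun z => (q z / (Real.exp (c * z / 2) * u z)) ^ 2)
        (2 * ((q1 z * (Real.exp (c * z / 2) * u z)
          - q z * (Real.exp (c * z / 2) * (u1 z + c / 2 * u z))) * q z)
          / (Real.exp (c * z / 2) * u z) ^ 3) (Iio 0) z := by
      intro z hz
      have hz' : z ≤ 0 := le_of_lt hz
      have hne := (hvpos z hz).ne'
      refine ((((hq' z hz').1.div (hv z hz') hne).pow 2).mono
        Iio_subset_Iic_self).congr_deriv ?_
      simp only [Pi.div_apply]
      generalize Real.exp (c * z / 2) * (u1 z + c / 2 * u z) = w1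
      generalize Real.exp (c * z / 2) * u z = w at hne ⊢
      norm_num
      field_simp
    refine antitoneOn_of_hasDerivWithinAt_nonpos (convex_Iio _)
      (fun s hs => (hd s hs).continuousWithinAt)
      (fun s hs => (hd s (interior_subset hs)).mono interior_subset) ?_
    intro z hz
    have hz' : z ∈ Iio (0 : ℝ) := interior_subset hz
    have := hWq z hz'
    exact div_nonpos_of_nonpos_of_nonneg (by linarith) (pow_pos (hvpos z hz') 3).le
  intro z hz
  by_contra hne
  have hz0 : z < 0 := lt_of_le_of_ne hz (by rintro rfl; exact hne hq0)
  -- The threshold `3/4` is what makes `b = lam + 2u - 1 + c²/4` at least `c²/4 + 1/2`.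
  obtain ⟨N, hN⟩ := eventually_atBot.1 (hulim.eventually (lt_mem_nhds (by norm_num : (3 / 4 : ℝ) < 1)))
  have hMz : min N z ≤ z := min_le_right _ _
  have hMN : min N z ≤ N := min_le_left _ _
  generalize min N z = M at hMz hMN
  have hM0 : M < 0 := lt_of_le_of_lt hMz hz0
  have hsub : Iic M ⊆ Iic (0 : ℝ) := Iic_subset_Iic.2 hM0.le
  refine tail_false c M q q1 _ (fun s hs => ((hq' s (hsub hs)).1).mono hsub)
    (fun s hs => (hqd1 s (hsub hs)).mono hsub) ?_ ?_ ?_ hqlim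
  · intro s hs
    have := hN s (le_trans hs hMN)
    linarith
  · intro hqM
    have h : (q z / (Real.exp (c * z / 2) * u z)) ^ 2
        ≤ (q M / (Real.exp (c * M / 2) * u M)) ^ 2 := hratio hM0 hz0 hMz
    have hpos : 0 < (q z / (Real.exp (c * z / 2) * u z)) ^ 2 :=
      sq_pos_of_ne_zero (div_ne_zero hne (hvpos z hz0).ne')
    rw [hqM] at h
    simp only [zero_div] at h
    nlinarith
  · have h := hWq M hM0
    have he := Real.exp_pos (c * M / 2)
    have huM := (hbound M hM0).1
    have h1 : Real.exp (c * M / 2) * (q M * q1 M * u M - q M ^ 2 * (u1 M + c / 2 * u M)) ≤ 0 := by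
      linarith
    have h2 := nonpos_of_mul_nonpos_right h1 he
    have h3 : q M ^ 2 * u1 M ≤ 0 :=
      mul_nonpos_of_nonneg_of_nonpos (sq_nonneg _) (hdec M hM0).le
    refine le_of_mul_le_mul_right ?_ huM
    linarith
end

section
/- (Spectral stability of the spreading wave: no unstable point spectrum.) Let 0 ≤ c < 2 and let u : (−∞, 0] → ℝ be a spreading wave: u is twice continuously differentiable, u'' + cu' + u(1 − u) = 0 on (−∞, 0], u(0) = 0, 0 < u(z) < 1 and u'(z) < 0 for all z < 0, and u(z) → 1 as z → −∞. Let λ ∈ ℂ with Re λ ≥ 0, and let p : (−∞, 0] → ℂ be twice continuously differentiable and square-integrable on (−∞, 0], with p''(z) + c p'(z) + (1 − 2u(z)) p(z) = λ p(z) for all z ≤ 0, p(0) = 0, and p(z) → 0 and p'(z) → 0 as z → −∞. Then p is identically zero. -/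
/-!
The function `s = u - u'` is a strictly positive supersolution of the linearized equation on
`(-∞, 0]`: `s'' + c s' + (1 - 2u) s = -u²`. It does not vanish at the endpoint `0`, because
`e^{cz} u'` is decreasing on `(-∞, 0]` and negative for `z < 0`, so that `u'(0) < 0`. Moreover
`s' = (1 + c) u' + u (1 - u)`, so `r = s'/s` satisfies `|r| ≤ 2 + c`.

For an eigenfunction `p`, consider `E = e^{cz} (Re (p̄ p') - r |p|²)`. The Riccati equation for `r`
gives `E' = e^{cz} (|p' - r p|² + (Re λ + u²/s) |p|²) ≥ 0`, so `E` is monotone. Since `E(0) = 0`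
(as `p(0) = 0`) and `E → 0` at `-∞` (as `r` is bounded and `p, p' → 0`), `E` vanishes identically;
hence `E' = 0`, and `u²/s > 0` forces `p = 0`.
-/

open Set Filter MeasureTheory

open Topology

/-- A `C²` function on `(-∞, 0]` has one-sided first and second derivatives given by
`derivWithin`. -/
lemma hasDerivWithinAt_of_contDiffOn_two {F : Type*} [NormedAddCommGroup F] [NormedSpace ℝ F]
    {f : ℝ → F} (hf : ContDiffOn ℝ 2 f (Iic 0)) {z : ℝ} (hz : z ≤ 0) :
    HasDerivWithinAt f (derivWithin f (Iic 0) z) (Iic 0) z ∧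
    HasDerivWithinAt (derivWithin f (Iic 0))
      (derivWithin (derivWithin f (Iic 0)) (Iic 0) z) (Iic 0) z := by
  have h1 : ContDiffOn ℝ 1 (derivWithin f (Iic 0)) (Iic 0) :=
    hf.derivWithin (uniqueDiffOn_Iic 0) (by norm_num)
  exact ⟨(hf.differentiableOn (by norm_num) z hz).hasDerivWithinAt,
    (h1.differentiableOn (by norm_num) z hz).hasDerivWithinAt⟩

/-- A monotone function on `(-∞, 0]` that tends to `0` at `-∞` and vanishes at `0` is zero. -/
lemma eq_zero_of_monotoneOn_of_tendsto {E : ℝ → ℝ} (hmono : MonotoneOn E (Iic 0))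
    (h0 : E 0 = 0) (hlim : Tendsto E atBot (𝓝 0)) {z : ℝ} (hz : z ≤ 0) : E z = 0 := by
  apply le_antisymm
  · rw [← h0]
    exact hmono hz (by simp) hz
  · refine le_of_tendsto hlim ?_
    filter_upwards [eventually_le_atBot z] with y hy
    exact hmono (hy.trans hz) hz hy

/-- The slope of the wave at the free boundary is strictly negative. -/
lemma slope_neg_at_zero {c : ℝ} {u v : ℝ → ℝ}
    (hv : ∀ z ≤ (0 : ℝ), HasDerivWithinAt v (-c * v z - u z * (1 - u z)) (Iic 0) z)
    (hbound : ∀ z < (0 : ℝ), 0 < u z ∧ u z < 1) (hdec : ∀ z < (0 : ℝ), v z < 0) :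
    v 0 < 0 := by
  have hD : ∀ z ≤ (0 : ℝ), HasDerivWithinAt (fun z => Real.exp (c * z) * v z)
      (-(Real.exp (c * z) * (u z * (1 - u z)))) (Iic 0) z := by
    intro z hz
    have he : HasDerivWithinAt (fun z : ℝ => Real.exp (c * z)) (Real.exp (c * z) * (c * 1))
        (Iic 0) z := (((hasDerivAt_id z).const_mul c).exp).hasDerivWithinAt
    exact (he.mul (hv z hz)).congr_deriv (by ring)
  have hanti : AntitoneOn (fun z => Real.exp (c * z) * v z) (Iic 0) := by
    refine antitoneOn_of_hasDerivWithinAt_nonpos (convex_Iic 0)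
      (fun z hz => (hD z hz).continuousWithinAt)
      (fun z hz => (hD z (mem_Iic.1 (interior_subset hz))).mono interior_subset) ?_
    intro z hz
    rw [interior_Iic] at hz
    obtain ⟨h1, h2⟩ := hbound z hz
    have : 0 < 1 - u z := by linarith
    have : 0 < Real.exp (c * z) * (u z * (1 - u z)) := by positivity
    linarith
  have h := hanti (a := -1) (b := 0) (by simp) (by simp) (by norm_num)
  have h2 : Real.exp (c * (-1)) * v (-1) < 0 :=
    mul_neg_of_pos_of_neg (Real.exp_pos _) (hdec _ (by norm_num))
  simp only [mul_zero, Real.exp_zero, one_mul] at h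
  linarith

/-- The derivative of the energy `E = e^{cz} (Re (p̄ p') - r |p|²)`, where `p = A + i B`,
`p' = A₁ + i B₁`, `λ = l + i m` and `r = s'/s` for the supersolution `s = u - v`, `v = u'`. -/
lemma energy_hasDerivWithinAt {c l m z : ℝ} {u v A B A₁ B₁ : ℝ → ℝ} (hs : u z - v z ≠ 0)
    (hu : HasDerivWithinAt u (v z) (Iic 0) z)
    (hv : HasDerivWithinAt v (-c * v z - u z * (1 - u z)) (Iic 0) z)
    (hA : HasDerivWithinAt A (A₁ z) (Iic 0) z) (hB : HasDerivWithinAt B (B₁ z) (Iic 0) z)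
    (hA₁ : HasDerivWithinAt A₁
      (-c * A₁ z - (1 - 2 * u z) * A z + (l * A z - m * B z)) (Iic 0) z)
    (hB₁ : HasDerivWithinAt B₁
      (-c * B₁ z - (1 - 2 * u z) * B z + (l * B z + m * A z)) (Iic 0) z) :
    HasDerivWithinAt
      (fun z => Real.exp (c * z) * (A z * A₁ z + B z * B₁ z
        - ((1 + c) * v z + u z * (1 - u z)) / (u z - v z) * (A z * A z + B z * B z)))
      (Real.exp (c * z) *
        ((A₁ z - ((1 + c) * v z + u z * (1 - u z)) / (u z - v z) * A z) ^ 2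
          + (B₁ z - ((1 + c) * v z + u z * (1 - u z)) / (u z - v z) * B z) ^ 2
          + (l + u z ^ 2 / (u z - v z)) * (A z ^ 2 + B z ^ 2))) (Iic 0) z := by
  have he : HasDerivWithinAt (fun z : ℝ => Real.exp (c * z)) (Real.exp (c * z) * (c * 1))
      (Iic 0) z := (((hasDerivAt_id z).const_mul c).exp).hasDerivWithinAt
  have hr := ((hv.const_mul (1 + c)).add (hu.mul (hu.const_sub 1))).div (hu.sub hv) hs
  have h := he.mul (((hA.mul hA₁).add (hB.mul hB₁)).sub (hr.mul ((hA.mul hA).add (hB.mul hB))))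
  refine h.congr_deriv ?_
  simp only [Pi.add_apply, Pi.sub_apply, Pi.mul_apply, Pi.div_apply]
  field_simp
  ring

/-- (Spectral stability of the spreading wave: no unstable point
spectrum.) Let `0 ≤ c < 2` and let `u` be a spreading wave on `(−∞, 0]`. If
`Re λ ≥ 0` and `p : (−∞, 0] → ℂ` is a twice continuously differentiable,
square-integrable solution of `p'' + c p' + (1 − 2u)p = λ p` with `p(0) = 0` and
`p, p' → 0` at `−∞`, then `p ≡ 0` on `(−∞, 0]`. -/
theorem spectral_stability_spreading_wave (c : ℝ) (hc0 : 0 ≤ c) (hc2 : c < 2)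
    (u : ℝ → ℝ) (hu : ContDiffOn ℝ 2 u (Iic 0))
    (hode : ∀ z ≤ (0 : ℝ),
      derivWithin (derivWithin u (Iic 0)) (Iic 0) z
        + c * derivWithin u (Iic 0) z + u z * (1 - u z) = 0)
    (hu0 : u 0 = 0)
    (hbound : ∀ z < (0 : ℝ), 0 < u z ∧ u z < 1)
    (hdec : ∀ z < (0 : ℝ), derivWithin u (Iic 0) z < 0)
    (hulim : Tendsto u atBot (nhds 1))
    (lam : ℂ) (hlam : 0 ≤ lam.re)
    (p : ℝ → ℂ) (hp : ContDiffOn ℝ 2 p (Iic 0))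
    (hpL2 : Integrable (fun z => ‖p z‖ ^ 2) (volume.restrict (Iic 0)))
    (hpode : ∀ z ≤ (0 : ℝ),
      derivWithin (derivWithin p (Iic 0)) (Iic 0) z
        + (c : ℂ) * derivWithin p (Iic 0) z
        + (1 - 2 * (u z : ℂ)) * p z = lam * p z)
    (hp0 : p 0 = 0)
    (hplim : Tendsto p atBot (nhds 0))
    (hplim' : Tendsto (derivWithin p (Iic 0)) atBot (nhds 0)) :
    ∀ z ≤ (0 : ℝ), p z = 0 := by
  set v := derivWithin u (Iic 0) with hvdef
  set q := derivWithin p (Iic 0) with hqdef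
  have hu' : ∀ z ≤ (0 : ℝ), HasDerivWithinAt u (v z) (Iic 0) z := fun z hz =>
    (hasDerivWithinAt_of_contDiffOn_two hu hz).1
  have hv' : ∀ z ≤ (0 : ℝ), HasDerivWithinAt v (-c * v z - u z * (1 - u z)) (Iic 0) z :=
    fun z hz => (hasDerivWithinAt_of_contDiffOn_two hu hz).2.congr_deriv
      (by linarith [hode z hz])
  have hp' : ∀ z ≤ (0 : ℝ), HasDerivWithinAt p (q z) (Iic 0) z := fun z hz =>
    (hasDerivWithinAt_of_contDiffOn_two hp hz).1
  have hq' : ∀ z ≤ (0 : ℝ), HasDerivWithinAt q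
      (-(c : ℂ) * q z - (1 - 2 * (u z : ℂ)) * p z + lam * p z) (Iic 0) z :=
    fun z hz => (hasDerivWithinAt_of_contDiffOn_two hp hz).2.congr_deriv
      (by linear_combination hpode z hz)
  have re' : ∀ {f : ℝ → ℂ} {d : ℂ} {z : ℝ}, HasDerivWithinAt f d (Iic 0) z →
      HasDerivWithinAt (fun z => (f z).re) d.re (Iic 0) z := fun {f d z} h =>
    Complex.reCLM.hasFDerivAt.comp_hasDerivWithinAt z h
  have im' : ∀ {f : ℝ → ℂ} {d : ℂ} {z : ℝ}, HasDerivWithinAt f d (Iic 0) z →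
      HasDerivWithinAt (fun z => (f z).im) d.im (Iic 0) z := fun {f d z} h =>
    Complex.imCLM.hasFDerivAt.comp_hasDerivWithinAt z h
  have hv0 : v 0 < 0 := slope_neg_at_zero hv' hbound hdec
  have hu01 : ∀ z ≤ (0 : ℝ), 0 ≤ u z ∧ u z ≤ 1 ∧ v z < 0 := by
    intro z hz
    rcases hz.lt_or_eq with h | rfl
    · exact ⟨(hbound z h).1.le, (hbound z h).2.le, hdec z h⟩
    · exact ⟨hu0.ge, by linarith, hv0⟩
  have hs : ∀ z ≤ (0 : ℝ), 0 < u z - v z := fun z hz => by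
    linarith [(hu01 z hz).1, (hu01 z hz).2.2]
  set r : ℝ → ℝ := fun z => ((1 + c) * v z + u z * (1 - u z)) / (u z - v z) with hr
  have hrb : ∀ z ≤ (0 : ℝ), |r z| ≤ 2 + c := by
    intro z hz
    obtain ⟨h1, h2, h3⟩ := hu01 z hz
    have h4 := hs z hz
    simp only [hr]
    rw [abs_div, abs_of_pos h4, div_le_iff₀ h4, abs_le]
    constructor <;> nlinarith [mul_nonneg hc0 h1, mul_nonneg hc0 (neg_nonneg.2 h3.le),
      mul_nonneg h1 (sub_nonneg.2 h2), mul_nonneg h1 h1]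
  set E : ℝ → ℝ := fun z => Real.exp (c * z) * ((p z).re * (q z).re + (p z).im * (q z).im
        - r z * ((p z).re * (p z).re + (p z).im * (p z).im)) with hE
  have hE' : ∀ z ≤ (0 : ℝ), HasDerivWithinAt E (Real.exp (c * z) *
        (((q z).re - r z * (p z).re) ^ 2 + ((q z).im - r z * (p z).im) ^ 2
          + (lam.re + u z ^ 2 / (u z - v z)) * ((p z).re ^ 2 + (p z).im ^ 2))) (Iic 0) z := by
    intro z hz
    refine energy_hasDerivWithinAt (m := lam.im) (hs z hz).ne' (hu' z hz) (hv' z hz)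
      (re' (hp' z hz)) (im' (hp' z hz)) ((re' (hq' z hz)).congr_deriv ?_)
      ((im' (hq' z hz)).congr_deriv ?_)
    · simp
    · simp
  have hmono : MonotoneOn E (Iic 0) := by
    refine monotoneOn_of_hasDerivWithinAt_nonneg (convex_Iic 0)
      (fun z hz => (hE' z hz).continuousWithinAt)
      (fun z hz => (hE' z (mem_Iic.1 (interior_subset hz))).mono interior_subset) ?_
    intro z hz
    have h4 := hs z (mem_Iic.1 (interior_subset hz))
    positivity
  have hE0 : E 0 = 0 := by simp [hE, hp0]
  have hElim : Tendsto E atBot (𝓝 0) := by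
    have hb : Tendsto (fun z => ‖p z‖ * ‖q z‖ + (2 + c) * ‖p z‖ ^ 2) atBot (𝓝 0) := by
      have := (hplim.norm.mul hplim'.norm).add ((hplim.norm.pow 2).const_mul (2 + c))
      simpa using this
    refine squeeze_zero_norm' ?_ hb
    filter_upwards [eventually_le_atBot 0] with z hz
    have hexp : Real.exp (c * z) ≤ 1 :=
      Real.exp_le_one_iff.2 (mul_nonpos_of_nonneg_of_nonpos hc0 hz)
    have hpp : (p z).re * (p z).re + (p z).im * (p z).im = ‖p z‖ ^ 2 := by
      rw [Complex.sq_norm, Complex.normSq_apply]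
    have hpq : |(p z).re * (q z).re + (p z).im * (q z).im| ≤ ‖p z‖ * ‖q z‖ := by
      have := Complex.abs_re_le_norm (star (p z) * q z)
      simpa using this
    simp only [hE, hpp]
    rw [norm_mul, Real.norm_eq_abs, Real.norm_eq_abs, abs_of_pos (Real.exp_pos _)]
    refine (mul_le_of_le_one_left (abs_nonneg _) hexp).trans ((abs_sub _ _).trans ?_)
    rw [abs_mul (r z), abs_of_nonneg (sq_nonneg ‖p z‖)]
    gcongr
    exact hrb z hz
  have hEz : ∀ z ≤ (0 : ℝ), E z = 0 := fun z hz =>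
    eq_zero_of_monotoneOn_of_tendsto hmono hE0 hElim hz
  intro z hz
  rcases hz.lt_or_eq with h | rfl
  swap
  · exact hp0
  have hd : HasDerivWithinAt E 0 (Iic 0) z :=
    (hasDerivWithinAt_const z (Iic 0) (0 : ℝ)).congr hEz (hEz z hz)
  have heq := (uniqueDiffOn_Iic (0 : ℝ) z hz).eq_deriv _ (hE' z hz) hd
  have hupos := (hbound z h).1
  have hspos := hs z hz
  have hk : 0 < lam.re + u z ^ 2 / (u z - v z) := by positivity
  have hsum := (mul_eq_zero.1 heq).resolve_left (Real.exp_pos _).ne'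
  have hn : (p z).re ^ 2 + (p z).im ^ 2 = 0 := by
    have h1 : 0 ≤ (p z).re ^ 2 + (p z).im ^ 2 := by positivity
    have h2 := mul_nonneg hk.le h1
    have h3 : (lam.re + u z ^ 2 / (u z - v z)) * ((p z).re ^ 2 + (p z).im ^ 2) = 0 := by
      linarith [sq_nonneg ((q z).re - r z * (p z).re), sq_nonneg ((q z).im - r z * (p z).im)]
    exact (mul_eq_zero.1 h3).resolve_left hk.ne'
  apply Complex.ext
  · exact pow_eq_zero_iff (two_ne_zero) |>.1 (by nlinarith [sq_nonneg (p z).re, sq_nonneg (p z).im])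
  · exact pow_eq_zero_iff (two_ne_zero) |>.1 (by nlinarith [sq_nonneg (p z).re, sq_nonneg (p z).im])
end

section
/- Let ν > 0 and define a₂ = ν/(1 + 2ν²), a₃ = −2ν³/((1 + 2ν²)²(1 + 3ν²)), a₄ = 10ν⁵/((1 + 2ν²)³(1 + 3ν²)(1 + 4ν²)), a₅ = −12ν⁷(6 + 19ν²)/((1 + 2ν²)⁴(1 + 3ν²)²(1 + 4ν²)(1 + 5ν²)), and let J(w) = a₂w² + a₃w³ + a₄w⁴ + a₅w⁵. Then the polynomial (νw + J(w))·J'(w) − w² + J(w)/ν has all coefficients of degree ≤ 5 equal to zero; that is, the invariance condition (νw + J(w))J'(w) = w² − J(w)/ν holds up to terms of order w⁶. -/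
/-!
The invariance defect `(νw + J)J' − w² + J/ν` is expanded by powers of `w`. Its coefficients in
degrees `0` and `1` vanish since `J` starts at `w²`, and those in degrees `2, …, 5` are the
recursion relations
`(nν + 1/ν) aₙ + (n + 1)/2 · ∑_{i+j=n+1} aᵢaⱼ = δ_{n,2}`,
which the closed forms of `a₂, …, a₅` satisfy. What remains is an explicit multiple of `w⁶`.
-/

open Polynomial

/-- With `ν > 0` and the coefficients `a₂, …, a₅` of the unstable-manifold
expansion, the truncated series `J(w) = a₂w² + a₃w³ + a₄w⁴ + a₅w⁵` satisfies the
invariance condition `(νw + J(w))J'(w) = w² − J(w)/ν` up to terms of order `w⁶`: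
all coefficients of degree `≤ 5` of `(νw + J(w))·J'(w) − w² + J(w)/ν` vanish. -/
theorem unstable_manifold_series (ν : ℝ) (hν : 0 < ν) :
    ∀ a2 a3 a4 a5 : ℝ,
      a2 = ν / (1 + 2 * ν ^ 2) →
      a3 = -2 * ν ^ 3 / ((1 + 2 * ν ^ 2) ^ 2 * (1 + 3 * ν ^ 2)) →
      a4 = 10 * ν ^ 5 / ((1 + 2 * ν ^ 2) ^ 3 * (1 + 3 * ν ^ 2) * (1 + 4 * ν ^ 2)) →
      a5 = -12 * ν ^ 7 * (6 + 19 * ν ^ 2) /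
          ((1 + 2 * ν ^ 2) ^ 4 * (1 + 3 * ν ^ 2) ^ 2 * (1 + 4 * ν ^ 2) * (1 + 5 * ν ^ 2)) →
    ∀ J : ℝ[X],
      J = C a2 * X ^ 2 + C a3 * X ^ 3 + C a4 * X ^ 4 + C a5 * X ^ 5 →
      ∀ k : ℕ, k ≤ 5 →
        ((C ν * X + J) * (derivative J) - X ^ 2 + C ν⁻¹ * J).coeff k = 0 := by
  intro a2 a3 a4 a5 h2 h3 h4 h5 J hJ k hk
  have e2 : (2 * ν + ν⁻¹) * a2 - 1 = 0 := by
    subst h2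
    field_simp
    ring
  have e3 : (3 * ν + ν⁻¹) * a3 + 2 * a2 ^ 2 = 0 := by
    subst h2 h3
    field_simp
    ring
  have e4 : (4 * ν + ν⁻¹) * a4 + 5 * (a2 * a3) = 0 := by
    subst h2 h3 h4
    field_simp
    ring
  have e5 : (5 * ν + ν⁻¹) * a5 + 6 * (a2 * a4) + 3 * a3 ^ 2 = 0 := by
    subst h2 h3 h4 h5
    field_simp
    ring
  have expand : (C ν * X + J) * (derivative J) - X ^ 2 + C ν⁻¹ * J =
      C ((2 * ν + ν⁻¹) * a2 - 1) * X ^ 2 +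
      C ((3 * ν + ν⁻¹) * a3 + 2 * a2 ^ 2) * X ^ 3 +
      C ((4 * ν + ν⁻¹) * a4 + 5 * (a2 * a3)) * X ^ 4 +
      C ((5 * ν + ν⁻¹) * a5 + 6 * (a2 * a4) + 3 * a3 ^ 2) * X ^ 5 +
      X ^ 6 * (7 * (C a2 * C a5 + C a3 * C a4) + (8 * (C a3 * C a5) + 4 * C a4 ^ 2) * X +
        9 * (C a4 * C a5) * X ^ 2 + 5 * C a5 ^ 2 * X ^ 3) := by
    subst hJ
    simp only [derivative_add, derivative_C_mul_X_pow, C_add, C_sub, C_mul, C_pow, C_1, map_ofNat,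
      Nat.cast_ofNat, Nat.add_one_sub_one]
    ring
  rw [expand, e2, e3, e4, e5]
  simp only [C_0, zero_mul, zero_add]
  rw [coeff_X_pow_mul', if_neg (by omega)]
end
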